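/- arXiv:2412.13319 — 7 statements merged into one kernel-verified Lean document; each statement's English description precedes it below -/
import Mathlib

section
/- Let M be a metric space such that every dense subset D of M carries a nontrivial probability measure. Then there exist a real number r > 0 and a subset M' of M such that M' is r-separated and M' carries a nontrivial probability measure. -/
open MeasureTheory

/-- A subset `A` of a space carries a *nontrivial probability measure* if there is a
probability measure on `A` (with the powerset σ-algebra `⊤`) giving every singleton
measure zero. -/
def HasNontrivialProbMeasure {M : Type*} (A : Set M) : Prop :=
  ∃ μ : @Measure ↥A ⊤, @IsProbabilityMeasure ↥A ⊤ μ ∧ ∀ x : ↥A, μ {x} = 0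

/-!
For each term of a sequence of radii tending to zero, Zorn's lemma gives a maximal separated set,
and maximality makes it a net of that radius. The union of these countably many sets is therefore
dense, so it carries a nontrivial probability measure. By countable additivity one of the sets has
positive measure, and normalizing the restriction to it gives the desired measure.
-/

open Filter Metric Set Topology
open scoped NNReal ENNReal

theorem hasNontrivialProbMeasure_of_ne_zero {M : Type*} {A : Set M} (μ : @Measure A ⊤)
    (hfin : @IsFiniteMeasure A ⊤ μ) (hne : μ ≠ 0) (hatom : ∀ x : A, μ {x} = 0) :
    HasNontrivialProbMeasure A := by
  let _ : MeasurableSpace A := ⊤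
  have : NeZero μ := ⟨hne⟩
  exact ⟨(μ univ)⁻¹ • μ, isProbabilityMeasureSMul, fun x => by
    rw [Measure.smul_apply, hatom, smul_zero]⟩

theorem hasNontrivialProbMeasure_iff_exists_measure {M : Type*} {A : Set M} :
    HasNontrivialProbMeasure A ↔
      ∃ μ : @Measure M ⊤, @IsFiniteMeasure M ⊤ μ ∧ (∀ x, μ {x} = 0) ∧ μ A ≠ 0 := by
  let _ : MeasurableSpace M := ⊤
  let _ : MeasurableSpace A := ⊤
  have hval : MeasurableEmbedding (Subtype.val : A → M) :=
    ⟨Subtype.val_injective, measurable_from_top, fun _ _ => trivial⟩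
  constructor
  · rintro ⟨μ, hμ, hatom⟩
    refine ⟨μ.map Subtype.val, inferInstance, fun x => ?_, ?_⟩
    · rw [hval.map_apply]
      have hsub : (Subtype.val ⁻¹' {x} : Set A).Subsingleton :=
        subsingleton_singleton.preimage Subtype.val_injective
      rcases hsub.eq_empty_or_singleton with hx | ⟨a, hx⟩
      · rw [hx, measure_empty]
      · rw [hx, hatom]
    · rw [hval.map_apply, Subtype.coe_preimage_self, measure_univ]
      exact one_ne_zero
  · rintro ⟨μ, hμ, hatom, hA⟩
    refine hasNontrivialProbMeasure_of_ne_zero (μ.comap Subtype.val) inferInstance ?_ fun x => ?_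
    · rw [← Measure.measure_univ_ne_zero, hval.comap_apply, Subtype.coe_image_univ]
      exact hA
    · rw [hval.comap_apply, image_singleton, hatom]

theorem HasNontrivialProbMeasure.exists_of_iUnion {M ι : Type*} [Countable ι] {S : ι → Set M}
    (h : HasNontrivialProbMeasure (⋃ i, S i)) : ∃ i, HasNontrivialProbMeasure (S i) := by
  obtain ⟨μ, hfin, hatom, hne⟩ := hasNontrivialProbMeasure_iff_exists_measure.1 h
  let _ : MeasurableSpace M := ⊤
  obtain ⟨i, hi⟩ := exists_measure_pos_of_not_measure_iUnion_null hne
  exact ⟨i, hasNontrivialProbMeasure_iff_exists_measure.2 ⟨μ, hfin, hatom, hi.ne'⟩⟩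

section PseudoEMetricSpace

variable {M : Type*} [PseudoEMetricSpace M]

theorem exists_maximal_isSeparated (ε : ℝ≥0∞) (s : Set M) :
    ∃ N, Maximal (fun N => N ⊆ s ∧ IsSeparated ε N) N :=
  zorn_subset {N | N ⊆ s ∧ IsSeparated ε N} fun c hc hchain =>
    ⟨⋃₀ c, ⟨sUnion_subset fun _ hN => (hc hN).1,
      hchain.pairwise_sUnion.2 fun _ hN => (hc hN).2⟩, fun _ => subset_sUnion_of_mem⟩

theorem exists_isSeparated_isCover (ε : ℝ≥0) (s : Set M) :
    ∃ N ⊆ s, IsSeparated ε N ∧ IsCover ε s N := by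
  obtain ⟨N, hN⟩ := exists_maximal_isSeparated ε s
  exact ⟨N, hN.prop.1, hN.prop.2, .of_maximal_isSeparated hN⟩

theorem dense_iUnion_of_isCover {ι : Type*} {l : Filter ι} [l.NeBot] {ε : ι → ℝ≥0}
    (hε : Tendsto ε l (𝓝 0)) {S : ι → Set M} (hS : ∀ i, IsCover (ε i) univ (S i)) :
    Dense (⋃ i, S i) := by
  rw [EMetric.dense_iff]
  intro x r hr
  have hε' : Tendsto (fun i => (ε i : ℝ≥0∞)) l (𝓝 0) := ENNReal.tendsto_coe.2 hε
  obtain ⟨i, hi⟩ := (hε'.eventually_lt_const hr).exists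
  obtain ⟨y, hy, hxy⟩ := hS i (mem_univ x)
  have hyx : edist y x < r := by
    rw [edist_comm]
    exact hxy.trans_lt hi
  exact ⟨y, hyx, mem_iUnion_of_mem i hy⟩

theorem stmt0_general (h : ∀ D : Set M, Dense D → HasNontrivialProbMeasure D) :
    ∃ (r : ℝ≥0) (M' : Set M), 0 < r ∧ IsSeparated r M' ∧ HasNontrivialProbMeasure M' := by
  obtain ⟨ε, -, hε_pos, hε⟩ := exists_seq_strictAnti_tendsto (0 : ℝ≥0)
  choose S _ hsep hcover using fun n => exists_isSeparated_isCover (ε n) (univ : Set M)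
  obtain ⟨n, hn⟩ := (h _ (dense_iUnion_of_isCover hε hcover)).exists_of_iUnion
  exact ⟨ε n, S n, hε_pos n, hsep n, hn⟩

end PseudoEMetricSpace

theorem lt_dist_of_isSeparated {M : Type*} [PseudoMetricSpace M] {r : ℝ≥0} {s : Set M}
    (hs : IsSeparated r s) {x y : M} (hx : x ∈ s) (hy : y ∈ s) (hxy : x ≠ y) : r < dist x y := by
  have h : (r : ℝ≥0∞) < edist x y := hs hx hy hxy
  rwa [edist_nndist, ENNReal.coe_lt_coe] at h

theorem stmt0 {M : Type*} [MetricSpace M]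
    (h : ∀ D : Set M, Dense D → HasNontrivialProbMeasure D) :
    ∃ (r : ℝ) (M' : Set M), 0 < r ∧
      (∀ x ∈ M', ∀ y ∈ M', x ≠ y → r ≤ dist x y) ∧
      HasNontrivialProbMeasure M' := by
  obtain ⟨r, M', hr, hsep, hM'⟩ := stmt0_general h
  exact ⟨r, M', hr, fun _ hx _ hy hxy => (lt_dist_of_isSeparated hsep hx hy hxy).le, hM'⟩
end

section
/- Let M be a metric space, r > 0, and let M' be an r-separated subset of M carrying a nontrivial probability measure μ'. Define the Borel measure μ on M by μ(E) = μ'({x ∈ M' : x ∈ E}) for Borel E ⊆ M (the pushforward of μ' along the inclusion of M' into M). Then μ is a Borel probability measure on M that is not concentrated on any separable subset: for every closed separable set S ⊆ M one has μ(M \ S) = 1. -/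
open MeasureTheory

/-!
An `r`-separated set is discrete, and a separable set meets a discrete subset of a metrizable space
in a countable set, which a measure vanishing on singletons does not charge. A separable set need
not be measurable, but its closure is, and the closure is again separable.
-/

open TopologicalSpace Topology

theorem countable_of_isSeparable_of_discreteTopology {X : Type*} [TopologicalSpace X]
    [DiscreteTopology X] {s : Set X} (hs : IsSeparable s) : s.Countable := by
  obtain ⟨c, hc, hsc⟩ := hs
  exact hc.mono (by rwa [closure_discrete] at hsc)

theorem map_apply_eq_zero_of_isSeparable {X Y : Type*} [TopologicalSpace X] [DiscreteTopology X]
    [MeasurableSpace X] [TopologicalSpace Y] [PseudoMetrizableSpace Y] [MeasurableSpace Y]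
    [OpensMeasurableSpace Y] {ν : Measure X} [NullSingletonClass ν] {f : X → Y}
    (hf : IsInducing f) (hfm : AEMeasurable f ν) {s : Set Y} (hs : IsSeparable s) :
    ν.map f s = 0 := by
  refine measure_mono_null subset_closure ?_
  rw [Measure.map_apply_of_aemeasurable hfm isClosed_closure.measurableSet]
  have hcount : (f ⁻¹' closure s).Countable :=
    countable_of_isSeparable_of_discreteTopology (hf.isSeparable_preimage hs.closure)
  exact hcount.measure_zero ν

theorem stmt3_general {M : Type*} [TopologicalSpace M] [PseudoMetrizableSpace M]
    [MeasurableSpace M] [OpensMeasurableSpace M] {M' : Set M} [DiscreteTopology M']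
    (μ' : @Measure ↥M' ⊤)
    (hprob : @IsProbabilityMeasure ↥M' ⊤ μ')
    (hnontriv : ∀ x : ↥M', μ' {x} = 0)
    (μ : Measure M)
    (hμ : ∀ E : Set M, MeasurableSet E → μ E = μ' ((↑) ⁻¹' E : Set ↥M')) :
    IsProbabilityMeasure μ ∧ ∀ S : Set M, IsSeparable S → μ Sᶜ = 1 := by
  let : MeasurableSpace M' := ⊤
  have hval : AEMeasurable ((↑) : M' → M) μ' := measurable_from_top.aemeasurable
  have hmap : μ = μ'.map (↑) := Measure.ext fun E hE ↦ by
    rw [hμ E hE, Measure.map_apply_of_aemeasurable hval hE]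
  have : NullSingletonClass μ' := ⟨hnontriv⟩
  have hμprob : IsProbabilityMeasure μ := hmap ▸ Measure.isProbabilityMeasure_map hval
  refine ⟨hμprob, fun S hS ↦ ?_⟩
  have hS0 : μ S = 0 := hmap ▸ map_apply_eq_zero_of_isSeparable IsInducing.subtypeVal hval hS
  exact (prob_compl_eq_one_iff₀ (.of_null hS0)).2 hS0

theorem stmt3 {M : Type*} [MetricSpace M] [MeasurableSpace M] [BorelSpace M]
    {r : ℝ} (hr : 0 < r) {M' : Set M}
    (hsep : ∀ x ∈ M', ∀ y ∈ M', x ≠ y → r ≤ dist x y)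
    (μ' : @Measure ↥M' ⊤)
    (hprob : @IsProbabilityMeasure ↥M' ⊤ μ')
    (hnontriv : ∀ x : ↥M', μ' {x} = 0)
    (μ : Measure M)
    (hμ : ∀ E : Set M, MeasurableSet E → μ E = μ' ((↑) ⁻¹' E : Set ↥M')) :
    IsProbabilityMeasure μ ∧
      ∀ S : Set M, IsClosed S → TopologicalSpace.IsSeparable S → μ Sᶜ = 1 := by
  have : DiscreteTopology M' := .of_forall_le_dist hr fun x y hxy ↦
    hsep x x.2 y y.2 (Subtype.coe_ne_coe.2 hxy)
  exact (stmt3_general μ' hprob hnontriv μ hμ).imp_right fun h S _ ↦ h S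
end

section
/- Let M be a metric space having a dense subset D that carries no nontrivial probability measure. Then every σ-finite Borel measure μ on M is concentrated on a separable subset: there exists a closed separable set S ⊆ M with μ(M \ S) = 0. -/
open MeasureTheory

/-!
Well-order the index set of an open cover `U` of `M` by `D` and send each point to the least index
of a member of the cover containing it. By Stone's argument, the points with least index `i` at
distance at least `δ` from `(U i)ᶜ` form a closed set, and for distinct `i` these closed sets are
`δ`-separated, so the preimage of every set of indices is an `F_σ`. The image of `μ` is thus a
measure on all subsets of `D`; its atomless part vanishes by hypothesis, so it lives on countably
many indices, and countably many `U i` cover `μ`-almost all of `M`. Apply this to balls of radius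
`1 / n` centred in `D`.
-/

open Set Metric TopologicalSpace
open scoped ENNReal

section LeastIndex

variable {X ι : Type*} [PseudoEMetricSpace X]

theorem locallyFinite_of_forall_le_edist {F : ι → Set X} {δ : ℝ≥0∞} (hδ : 0 < δ)
    (hF : ∀ i j, i ≠ j → ∀ x ∈ F i, ∀ y ∈ F j, δ ≤ edist x y) : LocallyFinite F := by
  intro x
  refine ⟨eball x (δ / 2), eball_mem_nhds x (ENNReal.half_pos hδ.ne'), Subsingleton.finite ?_⟩
  rintro i ⟨y, hyi, hy⟩ j ⟨z, hzj, hz⟩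
  by_contra hij
  refine (hF i j hij y hyi z hzj).not_gt ?_
  calc edist y z ≤ edist y x + edist z x := edist_triangle_right y z x
    _ < δ / 2 + δ / 2 := ENNReal.add_lt_add hy hz
    _ = δ := ENNReal.add_halves δ

variable [LinearOrder ι] {U : ι → Set X} {δ : ℝ≥0∞} {i j : ι}

/-- The sets of Stone's paracompactness argument: the points for which `i` is the least index of a
member of the family `U` containing them, and whose distance to the complement of `U i` is at
least `δ`. -/
def leastIndexCore (U : ι → Set X) (δ : ℝ≥0∞) (i : ι) : Set X :=
  {x | IsLeast {j | x ∈ U j} i ∧ δ ≤ infEDist x (U i)ᶜ}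

theorem isClosed_leastIndexCore (hU : ∀ i, IsOpen (U i)) (hδ : 0 < δ) (i : ι) :
    IsClosed (leastIndexCore U δ i) := by
  have core_eq : leastIndexCore U δ i = (⋂ j < i, (U j)ᶜ) ∩ {x | δ ≤ infEDist x (U i)ᶜ} := by
    ext x
    simp only [leastIndexCore, IsLeast, lowerBounds, mem_ofPred_eq, mem_inter_iff, mem_iInter,
      mem_compl_iff]
    constructor
    · rintro ⟨⟨-, hleast⟩, hx⟩
      exact ⟨fun j hj hxj ↦ (hleast hxj).not_gt hj, hx⟩
    · rintro ⟨hbelow, hx⟩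
      refine ⟨⟨?_, fun j hxj ↦ not_lt.1 fun hj ↦ hbelow j hj hxj⟩, hx⟩
      by_contra hxi
      exact (hδ.trans_le hx).ne' (infEDist_zero_of_mem hxi)
  rw [core_eq]
  exact (isClosed_biInter fun j _ ↦ (hU j).isClosed_compl).inter
    (isClosed_le continuous_const continuous_infEDist)

theorem le_edist_of_mem_leastIndexCore (hij : i ≠ j) {x y : X} (hx : x ∈ leastIndexCore U δ i)
    (hy : y ∈ leastIndexCore U δ j) : δ ≤ edist x y := by
  wlog hlt : i < j generalizing i j x y
  · rw [edist_comm]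
    exact this hij.symm hy hx (hij.lt_or_gt.resolve_left hlt)
  have hyi : y ∉ U i := fun h ↦ (hy.1.2 h).not_gt hlt
  exact hx.2.trans (infEDist_le_edist_of_mem hyi)

theorem iUnion_leastIndexCore (hU : IsOpen (U i)) :
    ⋃ n : ℕ, leastIndexCore U (n : ℝ≥0∞)⁻¹ i = {x | IsLeast {j | x ∈ U j} i} := by
  ext x
  refine ⟨fun hx ↦ (mem_iUnion.1 hx).choose_spec.1, fun hx ↦ mem_iUnion.2 ?_⟩
  have hpos : infEDist x (U i)ᶜ ≠ 0 := fun h ↦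
    (mem_iff_infEDist_zero_of_closed hU.isClosed_compl).2 h hx.1
  obtain ⟨n, hn⟩ := ENNReal.exists_inv_nat_lt hpos
  exact ⟨n, hx, hn.le⟩

theorem isClosed_biUnion_leastIndexCore (hU : ∀ i, IsOpen (U i)) (hδ : 0 < δ) (T : Set ι) :
    IsClosed (⋃ i ∈ T, leastIndexCore U δ i) := by
  rw [biUnion_eq_iUnion]
  refine LocallyFinite.isClosed_iUnion ?_ fun i ↦ isClosed_leastIndexCore hU hδ i
  exact locallyFinite_of_forall_le_edist hδ fun i j hij x hx y hy ↦
    le_edist_of_mem_leastIndexCore (Subtype.coe_ne_coe.2 hij) hx hy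

theorem measurable_of_forall_isLeast [MeasurableSpace X] [OpensMeasurableSpace X]
    [MeasurableSpace ι] (hU : ∀ i, IsOpen (U i)) {g : X → ι}
    (hg : ∀ x, IsLeast {i | x ∈ U i} (g x)) : Measurable g := by
  intro T _
  have preimage_eq : g ⁻¹' T = ⋃ n : ℕ, ⋃ i ∈ T, leastIndexCore U (n : ℝ≥0∞)⁻¹ i := by
    simp_rw [iUnion_comm (ι := ℕ), iUnion_leastIndexCore (hU _)]
    ext x
    simp only [mem_preimage, mem_iUnion, mem_ofPred_eq, exists_prop]
    exact ⟨fun hx ↦ ⟨g x, hx, hg x⟩, fun ⟨i, hi, hx⟩ ↦ (hg x).unique hx ▸ hi⟩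
  rw [preimage_eq]
  exact .iUnion fun n ↦ (isClosed_biUnion_leastIndexCore hU
    (ENNReal.inv_pos.2 (ENNReal.natCast_ne_top n)) T).measurableSet

end LeastIndex

theorem countable_setOf_measure_singleton_pos {α : Type*} [MeasurableSpace α]
    [MeasurableSingletonClass α] (ν : Measure α) [SFinite ν] : {a | 0 < ν {a}}.Countable :=
  Measure.countable_meas_pos_of_disjoint_iUnion (As := fun a ↦ {a}) measurableSet_singleton
    fun _ _ hab ↦ disjoint_singleton.2 hab

theorem nullSingletonClass_restrict_compl_setOf_measure_singleton_pos {α : Type*}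
    [MeasurableSpace α] [MeasurableSingletonClass α] (ν : Measure α) :
    NullSingletonClass (ν.restrict {a | 0 < ν {a}}ᶜ) where
  measure_singleton a := by
    rw [Measure.restrict_apply (measurableSet_singleton a)]
    by_cases ha : 0 < ν {a}
    · have hempty : {a} ∩ {a | 0 < ν {a}}ᶜ = ∅ :=
        singleton_inter_eq_empty.2 (notMem_compl_iff.2 ha)
      rw [hempty, measure_empty]
    · exact measure_mono_null inter_subset_left (nonpos_iff_eq_zero.1 (not_lt.1 ha))

section DiscreteMeasure

variable {Y : Type*} {A : Set Y}

theorem HasNontrivialProbMeasure.of_nullSingletonClass [m : MeasurableSpace A]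
    [DiscreteMeasurableSpace A] (ν : Measure A) [SFinite ν] [NullSingletonClass ν] [NeZero ν] :
    HasNontrivialProbMeasure A := by
  obtain rfl : m = ⊤ := top_unique fun s _ ↦ .of_discrete
  exact ⟨ν.toFinite, inferInstance, fun x ↦ toFinite_apply_eq_zero_iff.2 (measure_singleton x)⟩

theorem exists_countable_ae_mem_of_not_hasNontrivialProbMeasure
    (hA : ¬ HasNontrivialProbMeasure A) [MeasurableSpace A] [DiscreteMeasurableSpace A]
    (ν : Measure A) [SFinite ν] : ∃ C : Set A, C.Countable ∧ ∀ᵐ a ∂ν, a ∈ C := by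
  refine ⟨{a | 0 < ν {a}}, countable_setOf_measure_singleton_pos ν, ?_⟩
  by_contra hC
  have := nullSingletonClass_restrict_compl_setOf_measure_singleton_pos ν
  have : NeZero (ν.restrict {a | 0 < ν {a}}ᶜ) := ⟨mt Measure.restrict_eq_zero.1 hC⟩
  exact hA (.of_nullSingletonClass (ν.restrict {a | 0 < ν {a}}ᶜ))

theorem exists_countable_ae_mem_biUnion_of_isOpen {X : Type*} [PseudoEMetricSpace X]
    [MeasurableSpace X] [OpensMeasurableSpace X] (hA : ¬ HasNontrivialProbMeasure A)
    (μ : Measure X) [SFinite μ] {U : A → Set X} (hU : ∀ a, IsOpen (U a))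
    (hcover : ⋃ a, U a = univ) : ∃ C : Set A, C.Countable ∧ ∀ᵐ x ∂μ, x ∈ ⋃ a ∈ C, U a := by
  obtain ⟨_, _⟩ := exists_wellFoundedLT A
  let _ : MeasurableSpace A := ⊤
  have exists_least (x : X) : ∃ a, IsLeast {a | x ∈ U a} a :=
    WellFounded.has_min wellFounded_lt {a | x ∈ U a} (iUnion_eq_univ_iff.1 hcover x) |>.imp
      fun a ha ↦ ⟨ha.1, fun b hb ↦ not_lt.1 (ha.2 b hb)⟩
  choose g hg using exists_least
  have hgm : Measurable g := measurable_of_forall_isLeast hU hg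
  obtain ⟨C, hC, hgC⟩ := exists_countable_ae_mem_of_not_hasNontrivialProbMeasure hA (μ.map g)
  refine ⟨C, hC, ?_⟩
  filter_upwards [ae_of_ae_map hgm.aemeasurable hgC] with x hx
  exact mem_biUnion hx (hg x).1

end DiscreteMeasure

theorem stmt4_general {M : Type*} [PseudoEMetricSpace M] [MeasurableSpace M]
    [OpensMeasurableSpace M] (D : Set M) (hD : Dense D) (hno : ¬ HasNontrivialProbMeasure D)
    (μ : Measure M) [SFinite μ] :
    ∃ S : Set M, IsClosed S ∧ IsSeparable S ∧ μ Sᶜ = 0 := by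
  have hcover (n : ℕ) : ⋃ d : D, eball (d : M) (n : ℝ≥0∞)⁻¹ = univ := by
    refine iUnion_eq_univ_iff.2 fun x ↦ ?_
    obtain ⟨d, hd, hxd⟩ := EMetric.mem_closure_iff.1 (hD x) (n : ℝ≥0∞)⁻¹ (by simp)
    exact ⟨⟨d, hd⟩, hxd⟩
  choose C hC hμC using fun n ↦
    exists_countable_ae_mem_biUnion_of_isOpen hno μ (fun _ ↦ isOpen_eball) (hcover n)
  refine ⟨closure (⋃ n, (↑) '' C n), isClosed_closure,
    (countable_iUnion fun n ↦ (hC n).image _).isSeparable.closure, ?_⟩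
  change ∀ᵐ x ∂μ, x ∈ closure (⋃ n, (↑) '' C n)
  filter_upwards [ae_all_iff.2 hμC] with x hx
  refine EMetric.mem_closure_iff.2 fun ε hε ↦ ?_
  obtain ⟨n, hn⟩ := ENNReal.exists_inv_nat_lt hε.ne'
  obtain ⟨d, hd, hxd⟩ := mem_iUnion₂.1 (hx n)
  exact ⟨d, mem_iUnion.2 ⟨n, d, hd, rfl⟩, lt_trans hxd hn⟩

theorem stmt4 {M : Type*} [MetricSpace M] [MeasurableSpace M] [BorelSpace M]
    (D : Set M) (hD : Dense D) (hno : ¬ HasNontrivialProbMeasure D)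
    (μ : Measure M) (hσ : SigmaFinite μ) :
    ∃ S : Set M, IsClosed S ∧ TopologicalSpace.IsSeparable S ∧ μ Sᶜ = 0 :=
  stmt4_general D hD hno μ
end

section
/- Let M be a metric space, z ∈ M, r > 0, and let M' ⊆ M satisfy d(x,y) ≥ 3r for all distinct x, y ∈ M' and d(z,x) > r for all x ∈ M'. Let μ' be a nontrivial probability measure on M'. For a finite set N ⊆ M define f_N : M → ℝ by f_N(m) = r − min(dist(m,N), r), where dist(m,N) is the infimum of d(m,n) over n ∈ N. Then: (i) for every finite N ⊆ M, ∫_{x ∈ M'} f_N(x)/d(z,x) dμ'(x) = 0; (ii) 0 < ∫_{x ∈ M'} r/d(z,x) dμ'(x) ≤ 1. -/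
open MeasureTheory

/-- `fN r N m = r - min (dist m N) r`, where `dist m N` is the infimum of the distances
from `m` to points of `N` (with the convention `inf ∅ = +∞`, which is implemented by
inserting `r` into the set before taking the infimum: for nonempty `N` this agrees with
`r - min (Metric.infDist m N) r`, and for `N = ∅` it gives `0`). -/
noncomputable def fN {M : Type*} [MetricSpace M] (r : ℝ) (N : Finset M) (m : M) : ℝ :=
  r - sInf (insert r ((fun n => dist m n) '' (N : Set M)))

/-! An open ball of radius `r` contains at most one point of a `2r`-separated family, so it is null
for a measure vanishing on singletons. Given a finite set `N`, almost every point of the family is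
therefore at distance at least `r` from `N`, and there `fN r N` vanishes. -/

section Separated

variable {X M : Type*} [PseudoMetricSpace M] {u : X → M} {r : ℝ}

theorem subsingleton_preimage_ball_of_pairwise_le_dist
    (hu : Pairwise fun x y => 2 * r ≤ dist (u x) (u y)) (c : M) :
    (u ⁻¹' Metric.ball c r).Subsingleton := by
  intro x hx y hy
  by_contra hxy
  have hdisj : Disjoint (Metric.ball (u x) r) (Metric.ball (u y) r) :=
    Metric.ball_disjoint_ball (by linarith [hu hxy])
  exact Set.disjoint_left.1 hdisj (Metric.mem_ball_comm.1 hx) (Metric.mem_ball_comm.1 hy)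

theorem ae_le_dist_of_pairwise_le_dist [MeasurableSpace X] {μ : Measure X} [NullSingletonClass μ]
    (hu : Pairwise fun x y => 2 * r ≤ dist (u x) (u y)) (c : M) :
    ∀ᵐ x ∂μ, r ≤ dist (u x) c := by
  have hball : μ (u ⁻¹' Metric.ball c r) = 0 :=
    (subsingleton_preimage_ball_of_pairwise_le_dist hu c).measure_zero μ
  filter_upwards [measure_eq_zero_iff_ae_notMem.1 hball] with x hx
  exact not_lt.1 hx

end Separated

section fN

variable {M : Type*} [MetricSpace M] {r : ℝ} {N : Finset M}

theorem fN_eq_zero_of_forall_le_dist {m : M} (h : ∀ n ∈ N, r ≤ dist m n) : fN r N m = 0 := by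
  have hleast : IsLeast (insert r ((fun n => dist m n) '' (N : Set M))) r :=
    ⟨Set.mem_insert r _, Set.forall_mem_insert.2 ⟨le_rfl, Set.forall_mem_image.2 h⟩⟩
  rw [fN, hleast.csInf_eq, sub_self]

theorem ae_fN_eq_zero {X : Type*} [MeasurableSpace X] {μ : Measure X} {u : X → M}
    (h : ∀ n ∈ N, ∀ᵐ x ∂μ, r ≤ dist (u x) n) : ∀ᵐ x ∂μ, fN r N (u x) = 0 :=
  ((ae_ball_iff N.countable_toSet).2 h).mono fun _ => fN_eq_zero_of_forall_le_dist

end fN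

theorem integral_pos_of_ae_pos {X : Type*} [MeasurableSpace X] {μ : Measure X} [NeZero μ]
    {f : X → ℝ} (hfi : Integrable f μ) (hf : ∀ᵐ x ∂μ, 0 < f x) : 0 < ∫ x, f x ∂μ := by
  have hnonneg : 0 ≤ᵐ[μ] f := hf.mono fun _ => le_of_lt
  refine (integral_nonneg_of_ae hnonneg).lt_of_ne' fun hzero => ?_
  obtain ⟨x, hpos, hx⟩ := (hf.and ((integral_eq_zero_iff_of_nonneg_ae hnonneg hfi).1 hzero)).exists
  exact hpos.ne' hx

theorem norm_div_le_one_of_le {r t : ℝ} (hr : 0 ≤ r) (h : r ≤ t) : ‖r / t‖ ≤ 1 := by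
  rw [Real.norm_of_nonneg (div_nonneg hr (hr.trans h))]
  exact div_le_one_of_le₀ h (hr.trans h)

section ConstDiv

variable {X : Type*} [MeasurableSpace X] {μ : Measure X} [IsFiniteMeasure μ] {g : X → ℝ} {r : ℝ}

theorem integrable_const_div_of_le (hr : 0 ≤ r) (hg : AEMeasurable g μ)
    (hle : ∀ᵐ x ∂μ, r ≤ g x) : Integrable (fun x => r / g x) μ :=
  .of_bound (hg.const_div r).aestronglyMeasurable 1 (hle.mono fun _ => norm_div_le_one_of_le hr)

theorem integral_const_div_pos_of_le [NeZero μ] (hr : 0 < r) (hg : AEMeasurable g μ)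
    (hle : ∀ᵐ x ∂μ, r ≤ g x) : 0 < ∫ x, r / g x ∂μ :=
  integral_pos_of_ae_pos (integrable_const_div_of_le hr.le hg hle)
    (hle.mono fun _ h => div_pos hr (hr.trans_le h))

theorem integral_const_div_le_measureReal_univ_of_le (hr : 0 ≤ r) (hle : ∀ᵐ x ∂μ, r ≤ g x) :
    ∫ x, r / g x ∂μ ≤ μ.real Set.univ :=
  calc ∫ x, r / g x ∂μ ≤ ‖∫ x, r / g x ∂μ‖ := Real.le_norm_self _
    _ ≤ 1 * μ.real Set.univ :=
      norm_integral_le_of_norm_le_const (hle.mono fun _ => norm_div_le_one_of_le hr)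
    _ = μ.real Set.univ := one_mul _

end ConstDiv

theorem stmt7_general {X M : Type*} [MeasurableSpace X] [MetricSpace M] {μ : Measure X}
    [IsProbabilityMeasure μ] [NullSingletonClass μ] {u : X → M} (z : M) {r : ℝ} (hr : 0 < r)
    (hsep : Pairwise fun x y => 2 * r ≤ dist (u x) (u y)) (hz : ∀ᵐ x ∂μ, r ≤ dist z (u x))
    (hmeas : AEMeasurable (fun x => dist z (u x)) μ) :
    (∀ N : Finset M, ∫ x, fN r N (u x) / dist z (u x) ∂μ = 0) ∧
    (0 < ∫ x, r / dist z (u x) ∂μ ∧ ∫ x, r / dist z (u x) ∂μ ≤ 1) := by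
  refine ⟨fun N => ?_, integral_const_div_pos_of_le hr hmeas hz, ?_⟩
  · have hfN : ∀ᵐ x ∂μ, fN r N (u x) = 0 :=
      ae_fN_eq_zero fun n _ => ae_le_dist_of_pairwise_le_dist hsep n
    refine integral_eq_zero_of_ae (hfN.mono fun x hx => ?_)
    simp only [hx, zero_div, Pi.zero_apply]
  · simpa only [probReal_univ] using integral_const_div_le_measureReal_univ_of_le hr.le hz

theorem stmt7 {M : Type*} [MetricSpace M] (z : M) {r : ℝ} (hr : 0 < r) {M' : Set M}
    (hsep : ∀ x ∈ M', ∀ y ∈ M', x ≠ y → 3 * r ≤ dist x y)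
    (hz : ∀ x ∈ M', r < dist z x)
    (μ' : @Measure ↥M' ⊤)
    (hprob : @IsProbabilityMeasure ↥M' ⊤ μ')
    (hnontriv : ∀ x : ↥M', μ' {x} = 0) :
    (∀ N : Finset M, ∫ x : ↥M', fN r N (x : M) / dist z (x : M) ∂μ' = 0) ∧
    (0 < ∫ x : ↥M', r / dist z (x : M) ∂μ' ∧ ∫ x : ↥M', r / dist z (x : M) ∂μ' ≤ 1) := by
  let _ : MeasurableSpace ↥M' := ⊤
  have : NullSingletonClass μ' := ⟨hnontriv⟩
  exact stmt7_general z hr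
    (fun x y hxy => by linarith [hsep x x.2 y y.2 (Subtype.coe_ne_coe.2 hxy)])
    (.of_forall fun x => (hz x x.2).le) measurable_from_top.aemeasurable
end

section
/- Let M be a metric space, C ⊆ M a closed set, and let μ₊ and μ₋ be finite Borel measures on M that are mutually singular. If ∫ f dμ₊ = ∫ f dμ₋ for every bounded Lipschitz function f : M → ℝ that vanishes identically on C, then μ₊(M \ C) = 0 and μ₋(M \ C) = 0. -/
open MeasureTheory

/-!
Bounded Lipschitz functions vanishing off an open set `V` approximate the indicator of `V`
pointwise from below, so their integrals determine the measure of `V`. Applied to all open subsets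
of `Cᶜ`, a π-system generating the Borel sets, this shows that the two measures coincide on `Cᶜ`.
A measure that is singular to itself is zero.
-/

open Set Filter Topology
open scoped NNReal ENNReal

section ThinnedIndicator

variable {X : Type*} [PseudoEMetricSpace X]

/-- The approximation from below of the indicator of `V` which is dual to `thickenedIndicator`: it
vanishes off `V` and equals `1` at the points whose distance to `Vᶜ` is at least `δ`. It is
real-valued, so that it can be used as a test function for the Bochner integral. -/
noncomputable def thinnedIndicator {δ : ℝ} (hδ : 0 < δ) (V : Set X) (x : X) : ℝ :=
  1 - thickenedIndicator hδ Vᶜ x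

lemma lipschitzWith_thinnedIndicator {δ : ℝ} (hδ : 0 < δ) (V : Set X) :
    LipschitzWith δ.toNNReal⁻¹ (thinnedIndicator hδ V) := by
  intro x y
  rw [thinnedIndicator, thinnedIndicator, edist_sub_left]
  exact lipschitzWith_thickenedIndicator hδ Vᶜ x y

lemma thinnedIndicator_mem_Icc {δ : ℝ} (hδ : 0 < δ) (V : Set X) (x : X) :
    thinnedIndicator hδ V x ∈ Icc 0 1 :=
  ⟨sub_nonneg.2 (mod_cast thickenedIndicator_le_one hδ Vᶜ x), sub_le_self _ NNReal.zero_le_coe⟩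

lemma thinnedIndicator_of_notMem {δ : ℝ} (hδ : 0 < δ) {V : Set X} {x : X} (hx : x ∉ V) :
    thinnedIndicator hδ V x = 0 := by
  rw [thinnedIndicator, thickenedIndicator_one hδ Vᶜ hx, NNReal.coe_one, sub_self]

lemma thinnedIndicator_le_indicator {δ : ℝ} (hδ : 0 < δ) (V : Set X) (x : X) :
    thinnedIndicator hδ V x ≤ V.indicator 1 x := by
  by_cases hx : x ∈ V
  · rw [indicator_of_mem hx]
    exact (thinnedIndicator_mem_Icc hδ V x).2
  · rw [indicator_of_notMem hx, thinnedIndicator_of_notMem hδ hx]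

lemma tendsto_thinnedIndicator {δ : ℕ → ℝ} (hδ : ∀ n, 0 < δ n) (hδ₀ : Tendsto δ atTop (𝓝 0))
    {V : Set X} (hV : IsOpen V) (x : X) :
    Tendsto (fun n ↦ thinnedIndicator (hδ n) V x) atTop (𝓝 (V.indicator 1 x)) := by
  have hthick := tendsto_pi_nhds.1 (thickenedIndicator_tendsto_indicator_closure hδ hδ₀ Vᶜ) x
  have hind : V.indicator 1 x = 1 - (((closure Vᶜ).indicator (fun _ ↦ 1) x : ℝ≥0) : ℝ) := by
    by_cases hx : x ∈ V <;> simp [hV.isClosed_compl.closure_eq, hx]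
  rw [hind]
  exact (NNReal.tendsto_coe.2 hthick).const_sub 1

lemma tendsto_integral_thinnedIndicator [MeasurableSpace X] [OpensMeasurableSpace X]
    {μ : Measure X} {δ : ℕ → ℝ} (hδ : ∀ n, 0 < δ n) (hδ₀ : Tendsto δ atTop (𝓝 0))
    {V : Set X} (hV : IsOpen V) (hμV : μ V ≠ ∞) :
    Tendsto (fun n ↦ ∫ x, thinnedIndicator (hδ n) V x ∂μ) atTop (𝓝 (μ.real V)) := by
  rw [← integral_indicator_one hV.measurableSet]
  refine tendsto_integral_of_dominated_convergence (V.indicator 1)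
    (fun n ↦ (lipschitzWith_thinnedIndicator (hδ n) V).continuous.aestronglyMeasurable)
    ((integrable_indicator_iff hV.measurableSet).2 (integrableOn_const hμV))
    (fun n ↦ ae_of_all _ fun x ↦ ?_)
    (ae_of_all _ (tendsto_thinnedIndicator hδ hδ₀ hV))
  rw [Real.norm_of_nonneg (thinnedIndicator_mem_Icc (hδ n) V x).1]
  exact thinnedIndicator_le_indicator (hδ n) V x

end ThinnedIndicator

section LipschitzTestFunctions

variable {X : Type*} [PseudoEMetricSpace X] [MeasurableSpace X] {μ ν : Measure X}

lemma measure_eq_of_forall_lipschitz_integral_eq [OpensMeasurableSpace X] {V : Set X}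
    (hV : IsOpen V) (hμV : μ V ≠ ∞) (hνV : ν V ≠ ∞)
    (h : ∀ f : X → ℝ, (∃ K : ℝ≥0, LipschitzWith K f) → (∀ x, f x ∈ Icc 0 1) →
      (∀ x ∉ V, f x = 0) → ∫ x, f x ∂μ = ∫ x, f x ∂ν) :
    μ V = ν V := by
  have hδ (n : ℕ) : (0 : ℝ) < 1 / (n + 1) := Nat.one_div_pos_of_nat
  have hδ₀ := tendsto_one_div_add_atTop_nhds_zero_nat (𝕜 := ℝ)
  have hint (n : ℕ) :
      ∫ x, thinnedIndicator (hδ n) V x ∂μ = ∫ x, thinnedIndicator (hδ n) V x ∂ν :=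
    h _ ⟨_, lipschitzWith_thinnedIndicator (hδ n) V⟩ (thinnedIndicator_mem_Icc (hδ n) V)
      fun _ ↦ thinnedIndicator_of_notMem (hδ n)
  have hreal : μ.real V = ν.real V :=
    tendsto_nhds_unique ((tendsto_integral_thinnedIndicator hδ hδ₀ hV hμV).congr hint)
      (tendsto_integral_thinnedIndicator hδ hδ₀ hV hνV)
  exact (measureReal_eq_measureReal_iff hμV hνV).1 hreal

lemma restrict_eq_of_forall_lipschitz_integral_eq [BorelSpace X] {U : Set X}
    (hU : IsOpen U) (hμU : μ U ≠ ∞) (hνU : ν U ≠ ∞)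
    (h : ∀ f : X → ℝ, (∃ K : ℝ≥0, LipschitzWith K f) → (∀ x, f x ∈ Icc 0 1) →
      (∀ x ∉ U, f x = 0) → ∫ x, f x ∂μ = ∫ x, f x ∂ν) :
    μ.restrict U = ν.restrict U := by
  have measure_eq {V : Set X} (hV : IsOpen V) (hVU : V ⊆ U) : μ V = ν V :=
    measure_eq_of_forall_lipschitz_integral_eq hV (measure_ne_top_of_subset hVU hμU)
      (measure_ne_top_of_subset hVU hνU)
      fun f hlip hf hf₀ ↦ h f hlip hf fun x hx ↦ hf₀ x (notMem_subset hVU hx)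
  have : IsFiniteMeasure (μ.restrict U) := isFiniteMeasure_restrict.2 hμU
  refine ext_of_generate_finite {V | IsOpen V} BorelSpace.measurable_eq isPiSystem_isOpen
    (fun V (hV : IsOpen V) ↦ ?_) ?_
  · rw [Measure.restrict_apply hV.measurableSet, Measure.restrict_apply hV.measurableSet]
    exact measure_eq (hV.inter hU) inter_subset_right
  · rw [Measure.restrict_apply_univ, Measure.restrict_apply_univ]
    exact measure_eq hU subset_rfl

end LipschitzTestFunctions

lemma measure_eq_zero_of_mutuallySingular_of_restrict_eq {α : Type*} [MeasurableSpace α]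
    {μ ν : Measure α} {s : Set α} (hsing : μ.MutuallySingular ν)
    (hs : μ.restrict s = ν.restrict s) : μ s = 0 := by
  have hself : (μ.restrict s).MutuallySingular (μ.restrict s) := by
    nth_rw 2 [hs]
    exact hsing.mono Measure.restrict_le_self Measure.restrict_le_self
  exact Measure.restrict_eq_zero.1 ((Measure.MutuallySingular.self_iff _).1 hself)

theorem stmt12_general {M : Type*} [PseudoEMetricSpace M] [MeasurableSpace M] [BorelSpace M]
    {C : Set M} (hC : IsClosed C) {μp μm : Measure M} (hp : μp Cᶜ ≠ ∞) (hm : μm Cᶜ ≠ ∞)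
    (hsing : μp.MutuallySingular μm)
    (h : ∀ f : M → ℝ, (∃ K : ℝ≥0, LipschitzWith K f) → (∀ x, f x ∈ Icc 0 1) →
      (∀ x ∈ C, f x = 0) → ∫ x, f x ∂μp = ∫ x, f x ∂μm) :
    μp Cᶜ = 0 ∧ μm Cᶜ = 0 := by
  have hres : μp.restrict Cᶜ = μm.restrict Cᶜ :=
    restrict_eq_of_forall_lipschitz_integral_eq hC.isOpen_compl hp hm
      fun f hlip hf hf₀ ↦ h f hlip hf fun x hx ↦ hf₀ x (not_not_intro hx)
  exact ⟨measure_eq_zero_of_mutuallySingular_of_restrict_eq hsing hres,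
    measure_eq_zero_of_mutuallySingular_of_restrict_eq hsing.symm hres.symm⟩

theorem stmt12 {M : Type*} [MetricSpace M] [MeasurableSpace M] [BorelSpace M]
    (C : Set M) (hC : IsClosed C)
    (μp μm : Measure M) (hp : IsFiniteMeasure μp) (hm : IsFiniteMeasure μm)
    (hsing : μp.MutuallySingular μm)
    (h : ∀ f : M → ℝ, (∃ K : NNReal, LipschitzWith K f) → (∃ B : ℝ, ∀ x, |f x| ≤ B) →
      (∀ x ∈ C, f x = 0) → ∫ x, f x ∂μp = ∫ x, f x ∂μm) :
    μp Cᶜ = 0 ∧ μm Cᶜ = 0 :=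
  stmt12_general hC (measure_ne_top μp Cᶜ) (measure_ne_top μm Cᶜ) hsing fun f hlip hf ↦
    h f hlip ⟨1, fun x ↦ abs_le.2 ⟨neg_one_lt_zero.le.trans (hf x).1, (hf x).2⟩⟩
end

section
/- Let M be a metric space, z ∈ M, and let C ⊆ M be a closed set with z ∈ C. Let μ₊ and μ₋ be mutually singular Borel measures on M with μ₊({z}) = 0 and μ₋({z}) = 0, and such that the function x ↦ d(x,z) is integrable with respect to both μ₊ and μ₋. If ∫ f dμ₊ = ∫ f dμ₋ for every bounded Lipschitz function f : M → ℝ that vanishes identically on C, then μ₊(M \ C) = 0 and μ₋(M \ C) = 0. -/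
open MeasureTheory

/-!
A closed set `F` at positive distance from `C` is the limit of its thickened indicators, which are
bounded and Lipschitz and, for small radii, still vanish near `C`; testing against them shows that
the two measures agree on `F`. Hence the measures coincide on the complement of every thickening of
`C`, and so on `Cᶜ`. A measure that is mutually singular with itself is zero.
-/

open Filter Metric
open scoped ENNReal NNReal Topology

section Thickening

variable {M : Type*} [PseudoEMetricSpace M] {C F : Set M}

theorem thickening_subset_compl_thickening {δ ε : ℝ} (hF : F ⊆ (thickening (δ + ε) C)ᶜ) :
    thickening δ F ⊆ (thickening ε C)ᶜ := by
  intro x hxF hxC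
  obtain ⟨y, hyF, hxy⟩ := (mem_thickening_iff_exists_edist_lt F x).1 hxF
  have hyC : y ∈ thickening δ (thickening ε C) :=
    (mem_thickening_iff_exists_edist_lt _ y).2 ⟨x, hxC, edist_comm x y ▸ hxy⟩
  exact hF hyF (thickening_thickening_subset δ ε C hyC)

theorem iUnion_compl_thickening_eq_compl {u : ℕ → ℝ} (hu : ∀ n, 0 < u n)
    (hlim : Tendsto u atTop (𝓝 0)) (hC : IsClosed C) : ⋃ n, (thickening (u n) C)ᶜ = Cᶜ := by
  refine Set.Subset.antisymm (Set.iUnion_subset fun n ↦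
    Set.compl_subset_compl.2 (self_subset_thickening (hu n) C)) fun x hx ↦ ?_
  rw [← hC.closure_eq, closure_eq_iInter_thickening] at hx
  obtain ⟨δ, hδ, hxδ⟩ : ∃ δ : ℝ, 0 < δ ∧ x ∉ thickening δ C := by
    simpa only [Set.mem_compl_iff, Set.mem_iInter, not_forall, exists_prop] using hx
  obtain ⟨n, hn⟩ := (hlim.eventually_lt_const hδ).exists
  exact Set.mem_iUnion.2 ⟨n, fun hxn ↦ hxδ (thickening_mono hn.le C hxn)⟩

variable [MeasurableSpace M] [OpensMeasurableSpace M]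

theorem tendsto_integral_thickenedIndicator_of_thickening_subset {μ : Measure M} {s : Set M}
    (hs : μ s ≠ ∞) (hF : IsClosed F) {δ : ℕ → ℝ} (hδ : ∀ n, 0 < δ n)
    (hlim : Tendsto δ atTop (𝓝 0)) (hFs : ∀ n, thickening (δ n) F ⊆ s) :
    Tendsto (fun n ↦ ∫ x, (thickenedIndicator (hδ n) F x : ℝ) ∂μ) atTop (𝓝 (μ.real F)) := by
  have : IsFiniteMeasure (μ.restrict s) := isFiniteMeasure_restrict.2 hs
  have hreal : (μ.restrict s).real F = μ.real F :=
    congrArg ENNReal.toReal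
      (Measure.restrict_eq_self μ ((self_subset_thickening (hδ 0) F).trans (hFs 0)))
  have hint (n : ℕ) : ∫ x in s, (thickenedIndicator (hδ n) F x : ℝ) ∂μ =
      ∫ x, (thickenedIndicator (hδ n) F x : ℝ) ∂μ :=
    setIntegral_eq_integral_of_forall_compl_eq_zero fun x hx ↦
      NNReal.coe_eq_zero.2 (thickenedIndicator_zero (hδ n) F fun hxF ↦ hx (hFs n hxF))
  simpa only [hint, hreal] using
    tendsto_integral_thickenedIndicator_of_isClosed (μ.restrict s) hF hδ hlim

end Thickening

section Restrict

variable {α : Type*} [MeasurableSpace α] {μ ν : Measure α} {s : Set α}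

theorem restrict_eq_of_forall_isClosed_subset [TopologicalSpace α] [BorelSpace α]
    (hs : IsClosed s) (hμ : μ s ≠ ∞) (h : ∀ F ⊆ s, IsClosed F → μ F = ν F) :
    μ.restrict s = ν.restrict s := by
  have : IsFiniteMeasure (μ.restrict s) := isFiniteMeasure_restrict.2 hμ
  have heq (F : Set α) (hF : IsClosed F) : μ.restrict s F = ν.restrict s F := by
    rw [Measure.restrict_apply hF.measurableSet, Measure.restrict_apply hF.measurableSet]
    exact h _ Set.inter_subset_right (hF.inter hs)
  exact ext_of_generate_finite _
    (BorelSpace.measurable_eq.trans borel_eq_generateFrom_isClosed) isPiSystem_isClosed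
    heq (heq _ isClosed_univ)

theorem measure_eq_zero_of_mutuallySingular_of_restrict_eq_s13 (hμν : μ.MutuallySingular ν)
    (h : μ.restrict s = ν.restrict s) : μ s = 0 := by
  have hsing : (μ.restrict s).MutuallySingular (μ.restrict s) :=
    hμν.mono Measure.restrict_le_self (h.trans_le Measure.restrict_le_self)
  exact Measure.restrict_eq_zero.1 ((Measure.MutuallySingular.self_iff _).1 hsing)

end Restrict

/-- A measure is finite away from `C` if, for every `ε > 0`, the points at distance at least `ε`
from `C` form a set of finite measure. This is what makes bounded functions vanishing near `C`
integrable when the measure itself is infinite. -/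
def IsFiniteAwayFrom {M : Type*} [PseudoEMetricSpace M] [MeasurableSpace M]
    (μ : Measure M) (C : Set M) : Prop :=
  ∀ ε : ℝ, 0 < ε → μ (thickening ε C)ᶜ ≠ ∞

theorem isFiniteAwayFrom_of_integrable_dist {M : Type*} [PseudoMetricSpace M] [MeasurableSpace M]
    {μ : Measure M} {C : Set M} {z : M} (hz : z ∈ C) (hμ : Integrable (fun x ↦ dist x z) μ) :
    IsFiniteAwayFrom μ C := by
  intro ε hε
  have hsub : (thickening ε C)ᶜ ⊆ {x | ε ≤ dist x z} := fun x hx ↦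
    not_lt.1 fun hlt ↦ hx (mem_thickening_iff.2 ⟨z, hz, hlt⟩)
  exact ((measure_mono hsub).trans_lt (hμ.measure_ge_lt_top hε)).ne

namespace IsFiniteAwayFrom

variable {M : Type*} [PseudoEMetricSpace M] [MeasurableSpace M] {μ ν : Measure M} {C F : Set M}

theorem measure_eq_of_forall_integral_lipschitz_eq [OpensMeasurableSpace M]
    (hμ : IsFiniteAwayFrom μ C) (hν : IsFiniteAwayFrom ν C)
    (h : ∀ f : M → ℝ, (∃ K : ℝ≥0, LipschitzWith K f) → (∃ B : ℝ, ∀ x, |f x| ≤ B) →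
      (∃ δ : ℝ, 0 < δ ∧ ∀ x ∈ thickening δ C, f x = 0) → ∫ x, f x ∂μ = ∫ x, f x ∂ν)
    (hF : IsClosed F) {ε : ℝ} (hε : 0 < ε) (hFC : F ⊆ (thickening ε C)ᶜ) : μ F = ν F := by
  obtain ⟨δ, -, hδ, hlim⟩ := exists_seq_strictAnti_tendsto' (half_pos hε)
  have hδ₀ (n : ℕ) : 0 < δ n := (hδ n).1
  have hsub (n : ℕ) : thickening (δ n) F ⊆ (thickening (ε / 2) C)ᶜ :=
    thickening_subset_compl_thickening <| hFC.trans <| Set.compl_subset_compl.2 <|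
      thickening_mono (by linarith [(hδ n).2]) C
  have hint (n : ℕ) : ∫ x, (thickenedIndicator (hδ₀ n) F x : ℝ) ∂μ =
      ∫ x, (thickenedIndicator (hδ₀ n) F x : ℝ) ∂ν := by
    refine h _ ⟨_, lipschitzWith_thickenedIndicator (hδ₀ n) F⟩ ⟨1, fun x ↦ ?_⟩
      ⟨ε / 2, half_pos hε, fun x hx ↦ ?_⟩
    · rw [NNReal.abs_eq]
      exact thickenedIndicator_le_one (hδ₀ n) F x
    · exact NNReal.coe_eq_zero.2 (thickenedIndicator_zero (hδ₀ n) F fun hxF ↦ hsub n hxF hx)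
  have hlim_μ := tendsto_integral_thickenedIndicator_of_thickening_subset
    (hμ _ (half_pos hε)) hF hδ₀ hlim hsub
  have hlim_ν := tendsto_integral_thickenedIndicator_of_thickening_subset
    (hν _ (half_pos hε)) hF hδ₀ hlim hsub
  simp only [hint] at hlim_μ
  exact (measureReal_eq_measureReal_iff (measure_ne_top_of_subset hFC (hμ ε hε))
    (measure_ne_top_of_subset hFC (hν ε hε))).1 (tendsto_nhds_unique hlim_μ hlim_ν)

theorem restrict_compl_eq_of_forall_isClosed [BorelSpace M] (hμ : IsFiniteAwayFrom μ C)
    (hC : IsClosed C)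
    (h : ∀ ε : ℝ, 0 < ε → ∀ F ⊆ (thickening ε C)ᶜ, IsClosed F → μ F = ν F) :
    μ.restrict Cᶜ = ν.restrict Cᶜ := by
  obtain ⟨u, -, hu, hlim⟩ := exists_seq_strictAnti_tendsto (0 : ℝ)
  rw [← iUnion_compl_thickening_eq_compl hu hlim hC, Measure.restrict_iUnion_congr]
  exact fun n ↦ restrict_eq_of_forall_isClosed_subset isOpen_thickening.isClosed_compl
    (hμ _ (hu n)) (h _ (hu n))

end IsFiniteAwayFrom

theorem stmt13_general {M : Type*} [PseudoEMetricSpace M] [MeasurableSpace M] [BorelSpace M]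
    {C : Set M} (hC : IsClosed C) {μp μm : Measure M} (hsing : μp.MutuallySingular μm)
    (hp : IsFiniteAwayFrom μp C) (hm : IsFiniteAwayFrom μm C)
    (h : ∀ f : M → ℝ, (∃ K : ℝ≥0, LipschitzWith K f) → (∃ B : ℝ, ∀ x, |f x| ≤ B) →
      (∃ δ : ℝ, 0 < δ ∧ ∀ x ∈ thickening δ C, f x = 0) → ∫ x, f x ∂μp = ∫ x, f x ∂μm) :
    μp Cᶜ = 0 ∧ μm Cᶜ = 0 := by
  have hrestrict : μp.restrict Cᶜ = μm.restrict Cᶜ :=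
    hp.restrict_compl_eq_of_forall_isClosed hC fun _ hε _ hFC hF ↦
      hp.measure_eq_of_forall_integral_lipschitz_eq hm h hF hε hFC
  exact ⟨measure_eq_zero_of_mutuallySingular_of_restrict_eq_s13 hsing hrestrict,
    measure_eq_zero_of_mutuallySingular_of_restrict_eq_s13 hsing.symm hrestrict.symm⟩

theorem stmt13 {M : Type*} [MetricSpace M] [MeasurableSpace M] [BorelSpace M]
    (z : M) (C : Set M) (hC : IsClosed C) (hzC : z ∈ C)
    (μp μm : Measure M)
    (hsing : μp.MutuallySingular μm)
    (hpz : μp {z} = 0) (hmz : μm {z} = 0)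
    (hpd : Integrable (fun x => dist x z) μp)
    (hmd : Integrable (fun x => dist x z) μm)
    (h : ∀ f : M → ℝ, (∃ K : NNReal, LipschitzWith K f) → (∃ B : ℝ, ∀ x, |f x| ≤ B) →
      (∀ x ∈ C, f x = 0) → ∫ x, f x ∂μp = ∫ x, f x ∂μm) :
    μp Cᶜ = 0 ∧ μm Cᶜ = 0 :=
  stmt13_general hC hsing (isFiniteAwayFrom_of_integrable_dist hzC hpd)
    (isFiniteAwayFrom_of_integrable_dist hzC hmd) fun f hK hB ⟨_, hδ, hf⟩ ↦
      h f hK hB fun x hx ↦ hf x (self_subset_thickening hδ C hx)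
end

section
/- Let S = {0} ∪ (1,2] as a subset of ℝ. There do not exist finite Borel measures μ₁ and μ₂ on ℝ with μ₁(ℝ \ S) = 0 and μ₂(ℝ \ S) = 0 such that for every Lipschitz function g : ℝ → ℝ with g(0) = 0 one has ∫ g dμ₁ − ∫ g dμ₂ = g(1). -/
open MeasureTheory

/-!
Testing a representation of `δ(p)` by `μ₁ - μ₂` on Lipschitz approximations of the indicator of a
closed set `F` avoiding the base point `e` forces `μ₁ F - μ₂ F` to be `1` or `0` according to
whether `p ∈ F`. With `F = {p}` the measure `μ₁` must have an atom at `p`, which it cannot have if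
it lives on a set not containing `p`.
-/

section Evaluation

open Filter Metric Set
open scoped BoundedContinuousFunction NNReal Topology

variable {X : Type*}

lemma tendsto_thickenedIndicator_apply_of_isClosed [PseudoEMetricSpace X] {F : Set X}
    (hF : IsClosed F) {δ : ℕ → ℝ} (δ_pos : ∀ n, 0 < δ n) (δ_lim : Tendsto δ atTop (𝓝 0)) (x : X) :
    Tendsto (fun n ↦ (thickenedIndicator (δ_pos n) F x : ℝ)) atTop (𝓝 (F.indicator 1 x)) := by
  have h := tendsto_pi_nhds.mp (thickenedIndicator_tendsto_indicator_closure δ_pos δ_lim F) x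
  rw [hF.closure_eq] at h
  simpa only [NNReal.coe_indicator, NNReal.coe_one, Pi.one_def] using NNReal.tendsto_coe.mpr h

lemma measureReal_sub_measureReal_eq_indicator_of_forall_lipschitz [PseudoEMetricSpace X]
    [MeasurableSpace X] [OpensMeasurableSpace X] {μ₁ μ₂ : Measure X} [IsFiniteMeasure μ₁]
    [IsFiniteMeasure μ₂] {e p : X}
    (h : ∀ g : X →ᵇ ℝ, (∃ K : ℝ≥0, LipschitzWith K g) → g e = 0 →
      ∫ x, g x ∂μ₁ - ∫ x, g x ∂μ₂ = g p)
    {F : Set X} (hF : IsClosed F) (he : e ∉ F) :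
    μ₁.real F - μ₂.real F = F.indicator 1 p := by
  let δ : ℕ → ℝ := fun n ↦ 1 / ((n : ℝ) + 1)
  have δ_pos (n : ℕ) : 0 < δ n := Nat.one_div_pos_of_nat
  have δ_lim : Tendsto δ atTop (𝓝 0) := tendsto_one_div_add_atTop_nhds_zero_nat
  let g (n : ℕ) : X →ᵇ ℝ := (thickenedIndicator (δ_pos n) F).comp _ NNReal.isometry_coe.lipschitz
  have g_lipschitz (n : ℕ) : ∃ K : ℝ≥0, LipschitzWith K (g n) :=
    ⟨_, NNReal.isometry_coe.lipschitz.comp (lipschitzWith_thickenedIndicator (δ_pos n) F)⟩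
  have g_base : ∀ᶠ n in atTop, g n e = 0 := by
    have e_far := eventually_notMem_thickening_of_infEDist_pos (hF.closure_eq.symm ▸ he)
    filter_upwards [δ_lim.eventually e_far] with n hn
    exact congrArg NNReal.toReal (thickenedIndicator_zero (δ_pos n) F hn)
  have lim_integral : Tendsto (fun n ↦ ∫ x, g n x ∂μ₁ - ∫ x, g n x ∂μ₂) atTop
      (𝓝 (μ₁.real F - μ₂.real F)) :=
    (tendsto_integral_thickenedIndicator_of_isClosed μ₁ hF δ_pos δ_lim).sub
      (tendsto_integral_thickenedIndicator_of_isClosed μ₂ hF δ_pos δ_lim)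
  have lim_eval : Tendsto (fun n ↦ g n p) atTop (𝓝 (F.indicator 1 p)) :=
    tendsto_thickenedIndicator_apply_of_isClosed hF δ_pos δ_lim p
  refine tendsto_nhds_unique_of_eventuallyEq lim_integral lim_eval ?_
  filter_upwards [g_base] with n hn using h (g n) (g_lipschitz n) hn

theorem stmt14_general [EMetricSpace X] [MeasurableSpace X] [OpensMeasurableSpace X] {e p : X}
    (hep : e ≠ p) :
    ¬ ∃ (μ₁ μ₂ : Measure X), IsFiniteMeasure μ₁ ∧ IsFiniteMeasure μ₂ ∧ μ₁ {p} = 0 ∧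
      ∀ g : X →ᵇ ℝ, (∃ K : ℝ≥0, LipschitzWith K g) → g e = 0 →
        ∫ x, g x ∂μ₁ - ∫ x, g x ∂μ₂ = g p := by
  rintro ⟨μ₁, μ₂, _, _, no_atom, h⟩
  have mass_diff : μ₁.real {p} - μ₂.real {p} = 1 := by
    simpa using measureReal_sub_measureReal_eq_indicator_of_forall_lipschitz h
      isClosed_singleton (notMem_singleton_iff.mpr hep)
  have mass_zero : μ₁.real {p} = 0 := by rw [measureReal_def, no_atom, ENNReal.toReal_zero]
  linarith [measureReal_nonneg (μ := μ₂) (s := {p})]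

end Evaluation

theorem stmt14 :
    ¬ ∃ (μ₁ μ₂ : Measure ℝ), IsFiniteMeasure μ₁ ∧ IsFiniteMeasure μ₂ ∧
      μ₁ (({0} ∪ Set.Ioc 1 2 : Set ℝ)ᶜ) = 0 ∧
      μ₂ (({0} ∪ Set.Ioc 1 2 : Set ℝ)ᶜ) = 0 ∧
      ∀ g : ℝ → ℝ, (∃ K : NNReal, LipschitzWith K g) → g 0 = 0 →
        ∫ x, g x ∂μ₁ - ∫ x, g x ∂μ₂ = g 1 := by
  rintro ⟨μ₁, μ₂, fin₁, fin₂, null₁, -, h⟩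
  exact stmt14_general zero_ne_one
    ⟨μ₁, μ₂, fin₁, fin₂, measure_mono_null (by simp) null₁, fun g ↦ h g⟩
end
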